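/- Let A be a separable C*-algebra such that every element of A is a norm limit of invertible elements of the unitization Ã. Let G be a finite group and let α and β be actions of G on A. Assume: (1) for every g ∈ G, the automorphisms α_g and β_g are approximately unitarily equivalent, i.e. for every finite set F₁ ⊆ A and δ > 0 there is a unitary u in the multiplier algebra M(A) with ‖u·β_g(y)·u* − α_g(y)‖ < δ for all y ∈ F₁; and (2) both α and β admit Rohlin sequences: for each g ∈ G there are sequences (f_{g,n})_{n∈ℕ} and (f'_{g,n})_{n∈ℕ} of positive contractions in A such that for all a ∈ A and all g, h ∈ G one has lim_n ‖f_{g,n}·a − a·f_{g,n}‖ = 0, lim_n ‖f_{g,n}·f_{h,n}·a‖ = 0 whenever g ≠ h, lim_n ‖(f_{g,n}² − f_{g,n})·a‖ = 0, lim_n ‖(Σ_{k∈G} f_{k,n})·a − a‖ = 0 and lim_n ‖(α_g(f_{h,n}) − f_{gh,n})·a‖ = 0, and the same conditions hold for (f'_{g,n}) with β in place of α. Then there exists a *-automorphism θ of A which is approximately inner (for every finite set F ⊆ A and ε > 0 there is a unitary u ∈ M(A) with ‖θ(a) − u·a·u*‖ < ε for all a ∈ F) and satisfies θ ∘ α_g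 ∘ θ⁻¹ = β_g for every g ∈ G. (Theorem 3.5 of the paper, with the Rohlin property of α and β expressed by representative sequences of the Rohlin projections in the central sequence algebra F(A), and with the consequence of 'almost stable rank one' that is used in the proof, namely A ⊆ closure(GL(Ã)), taken as hypothesis.) -/

import Mathlib

open scoped MultiplierAlgebra
open Filter Topology

/-!
Given unitaries `u k` and a Rohlin tower `f k`, the multipliers `w n = ∑ k, u k * f k n` are
asymptotically isometric on `A` and are limits of invertible elements, so by polar decomposition
they can be replaced by unitaries `v n`. The inner automorphism given by `v n` acts like `u k` on
the `k`-th level of the tower; choosing `u k` to carry `β k` approximately to `α k`, it conjugates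
`β` approximately to `α`, and it barely moves the elements on which the two actions already agree.
Doing this alternately to `α` and `β` (the Evans–Kishimoto intertwining) yields two convergent
sequences of inner automorphisms with limits `φ` and `ψ` such that `φ α φ⁻¹ = ψ β ψ⁻¹`, and
`θ = ψ⁻¹ φ`.
-/

/-- Two sequences in a normed group are asymptotically equal if their difference tends to `0` in
norm. Approximate identities along a Rohlin tower become `calc` chains for this relation. -/
def AsympEq {E : Type*} [SeminormedAddCommGroup E] (x y : ℕ → E) : Prop :=
  Tendsto (fun n ↦ ‖x n - y n‖) atTop (𝓝 0)

local infix:50 "≈₀" => AsympEq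

namespace AsympEq

section Group

variable {E : Type*} [SeminormedAddCommGroup E] {x y z : ℕ → E}

theorem iff_tendsto_sub : x ≈₀ y ↔ Tendsto (fun n ↦ x n - y n) atTop (𝓝 0) :=
  tendsto_zero_iff_norm_tendsto_zero.symm

theorem of_norm_sub_le {E' : Type*} [SeminormedAddCommGroup E'] {x' y' : ℕ → E'} (h : x ≈₀ y)
    (hle : ∀ n, ‖x' n - y' n‖ ≤ ‖x n - y n‖) : x' ≈₀ y' :=
  squeeze_zero (fun _ ↦ norm_nonneg _) hle h

theorem symm (h : x ≈₀ y) : y ≈₀ x :=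
  of_norm_sub_le h fun _ ↦ (norm_sub_rev _ _).le

theorem trans (h : x ≈₀ y) (h' : y ≈₀ z) : x ≈₀ z :=
  squeeze_zero (fun _ ↦ norm_nonneg _) (fun _ ↦ norm_sub_le_norm_sub_add_norm_sub _ _ _)
    (by simpa using Tendsto.add h h')

instance : Trans (AsympEq (E := E)) (AsympEq (E := E)) (AsympEq (E := E)) where
  trans := AsympEq.trans

theorem sum {ι : Type*} {s : Finset ι} {x y : ι → ℕ → E} (h : ∀ i ∈ s, x i ≈₀ y i) :
    (fun n ↦ ∑ i ∈ s, x i n) ≈₀ fun n ↦ ∑ i ∈ s, y i n := by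
  simp only [iff_tendsto_sub, ← Finset.sum_sub_distrib] at h ⊢
  simpa using tendsto_finsetSum s h

theorem tendsto {a : E} (h : x ≈₀ y) (hx : Tendsto x atTop (𝓝 a)) : Tendsto y atTop (𝓝 a) := by
  simpa using hx.sub (iff_tendsto_sub.mp h)

end Group

section Ring

variable {R : Type*} [NonUnitalNormedRing R] {x y : ℕ → R} {b : ℕ → R} {C : ℝ}

theorem mul_left_of_norm_le (hb : ∀ n, ‖b n‖ ≤ C) (h : x ≈₀ y) :
    (fun n ↦ b n * x n) ≈₀ fun n ↦ b n * y n := by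
  simp only [iff_tendsto_sub, ← mul_sub] at h ⊢
  exact isBoundedUnder_le_mul_tendsto_zero (isBoundedUnder_of ⟨C, hb⟩) h

theorem mul_right_of_norm_le (hb : ∀ n, ‖b n‖ ≤ C) (h : x ≈₀ y) :
    (fun n ↦ x n * b n) ≈₀ fun n ↦ y n * b n := by
  simp only [iff_tendsto_sub, ← sub_mul] at h ⊢
  exact h.zero_mul_isBoundedUnder_le (isBoundedUnder_of ⟨C, hb⟩)

theorem const_mul (a : R) (h : x ≈₀ y) : (fun n ↦ a * x n) ≈₀ fun n ↦ a * y n :=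
  h.mul_left_of_norm_le fun _ ↦ le_rfl

theorem mul_const (a : R) (h : x ≈₀ y) : (fun n ↦ x n * a) ≈₀ fun n ↦ y n * a :=
  h.mul_right_of_norm_le fun _ ↦ le_rfl

theorem star [StarRing R] [NormedStarGroup R] (h : x ≈₀ y) :
    (fun n ↦ star (x n)) ≈₀ fun n ↦ star (y n) :=
  of_norm_sub_le h fun n ↦ by rw [← star_sub, norm_star]

end Ring

end AsympEq

theorem exists_isUnit_asympEq {R : Type*} [NormedRing R] {w : ℕ → R} {C : ℝ}
    (hC : ∀ n, ‖w n‖ ≤ C) (hw : ∀ n, w n ∈ closure {x : R | IsUnit x}) :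
    ∃ x : ℕ → R, (∀ n, IsUnit (x n)) ∧ (∀ n, ‖x n‖ ≤ 1 + C) ∧ x ≈₀ w := by
  choose x hx hxw using fun n : ℕ ↦
    Metric.mem_closure_iff.mp (hw n) _ (Nat.one_div_pos_of_nat (n := n))
  have hdist : ∀ n, ‖x n - w n‖ ≤ 1 / ((n : ℝ) + 1) := fun n ↦ by
    rw [← dist_eq_norm, dist_comm]
    exact (hxw n).le
  refine ⟨x, hx, fun n ↦ ?_, squeeze_zero (fun _ ↦ norm_nonneg _) hdist
    tendsto_one_div_add_atTop_nhds_zero_nat⟩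
  calc ‖x n‖ ≤ ‖x n - w n‖ + ‖w n‖ := norm_le_norm_sub_add _ _
    _ ≤ 1 + C := by
      gcongr
      exacts [(hdist n).trans (div_le_one_of_le₀ (by linarith [n.cast_nonneg (α := ℝ)])
        (by positivity)), hC n]

section Polar

variable {M : Type*} [CStarAlgebra M]

theorem norm_le_one_of_mem_unitary {v : M} (hv : v ∈ unitary M) : ‖v‖ ≤ 1 := by
  rcases subsingleton_or_nontrivial M with _ | _
  · simp [Subsingleton.elim v 0]
  · exact (CStarRing.norm_of_mem_unitary hv).le

section Order

variable [PartialOrder M] [StarOrderedRing M]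

theorem isUnit_cfcAbs {x : M} (hx : IsUnit x) : IsUnit (CFC.abs x) :=
  ((Commute.refl _).isUnit_mul_iff.mp (CFC.abs_mul_abs x ▸ hx.star.mul hx)).1

theorem exists_unitary_mul_abs_eq {x : M} (hx : IsUnit x) :
    ∃ v : unitary M, v * CFC.abs x = x := by
  obtain ⟨h, hh⟩ := isUnit_cfcAbs hx
  have hself : star (↑h⁻¹ : M) = ↑h⁻¹ := by
    have hstar : star h = h := Units.ext <| by
      rw [Units.coe_star, hh, (CFC.abs_nonneg x).isSelfAdjoint.star_eq]
    rw [← Units.coe_star_inv, hstar]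
  have hleft : star (x * ↑h⁻¹) * (x * ↑h⁻¹) = 1 := by
    calc star (x * ↑h⁻¹) * (x * ↑h⁻¹) = ↑h⁻¹ * (star x * x) * ↑h⁻¹ := by
          simp only [star_mul, hself, mul_assoc]
      _ = 1 := by simp [← CFC.abs_mul_abs, ← hh]
  exact ⟨⟨x * ↑h⁻¹, (hx.mul h⁻¹.isUnit).mem_unitary_of_star_mul_self hleft⟩,
    by simp [← hh, mul_assoc]⟩

theorem norm_le_norm_add_one_mul {h : M} (hh : 0 ≤ h) (z : M) : ‖z‖ ≤ ‖(h + 1) * z‖ := by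
  have hone_le : 1 ≤ star (h + 1) * (h + 1) :=
    calc (1 : M) ≤ 1 + (star h * h + (h + h)) :=
          le_add_of_nonneg_right (add_nonneg (star_mul_self_nonneg h) (add_nonneg hh hh))
      _ = star (h + 1) * (h + 1) := by
          rw [star_add, star_one, hh.isSelfAdjoint.star_eq]; noncomm_ring
  have hconj : star z * z ≤ star ((h + 1) * z) * ((h + 1) * z) := by
    simpa [mul_assoc] using star_left_conjugate_le_conjugate hone_le z
  have hnorm := CStarAlgebra.norm_le_norm_of_nonneg_of_le (star_mul_self_nonneg z) hconj
  rw [CStarRing.norm_star_mul_self, CStarRing.norm_star_mul_self] at hnorm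
  exact (mul_self_le_mul_self_iff (norm_nonneg _) (norm_nonneg _)).mpr hnorm

theorem norm_abs_mul_sub_le (x d : M) : ‖CFC.abs x * d - d‖ ≤ ‖star x * (x * d) - d‖ :=
  calc ‖CFC.abs x * d - d‖ ≤ ‖(CFC.abs x + 1) * (CFC.abs x * d - d)‖ :=
        norm_le_norm_add_one_mul (CFC.abs_nonneg x) _
    _ = ‖star x * (x * d) - d‖ := by
        rw [← mul_assoc (star x), ← CFC.abs_mul_abs]; noncomm_ring

end Order

theorem exists_unitary_mul_asympEq_of_mem_closure {w : ℕ → M} {C : ℝ} (hC : ∀ n, ‖w n‖ ≤ C)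
    (hw : ∀ n, w n ∈ closure {x : M | IsUnit x}) :
    ∃ v : ℕ → unitary M, ∀ d : M, (fun n ↦ star (w n) * (w n * d)) ≈₀ (fun _ ↦ d) →
      (fun n ↦ v n * d) ≈₀ fun n ↦ w n * d := by
  let _ : PartialOrder M := CStarAlgebra.spectralOrder M
  have : StarOrderedRing M := CStarAlgebra.spectralOrderedRing M
  obtain ⟨x, hx, hxC, hxw⟩ := exists_isUnit_asympEq hC hw
  choose v hv using fun n ↦ exists_unitary_mul_abs_eq (hx n)
  refine ⟨v, fun d hd ↦ ?_⟩
  have hxd : (fun n ↦ star (x n) * (x n * d)) ≈₀ fun _ ↦ d :=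
    calc (fun n ↦ star (x n) * (x n * d))
        ≈₀ fun n ↦ star (x n) * (w n * d) :=
          (hxw.mul_const d).mul_left_of_norm_le fun n ↦ (norm_star _).trans_le (hxC n)
      _ ≈₀ fun n ↦ star (w n) * (w n * d) :=
          hxw.star.mul_right_of_norm_le fun n ↦ norm_mul_le_of_le (hC n) le_rfl
      _ ≈₀ fun _ ↦ d := hd
  have habs : (fun n ↦ CFC.abs (x n) * d) ≈₀ fun _ ↦ d :=
    hxd.of_norm_sub_le fun n ↦ norm_abs_mul_sub_le (x n) d
  calc (fun n ↦ v n * d)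
      ≈₀ fun n ↦ v n * (CFC.abs (x n) * d) :=
        habs.symm.mul_left_of_norm_le fun n ↦ norm_le_one_of_mem_unitary (v n).2
    _ = fun n ↦ x n * d := funext fun n ↦ by rw [← mul_assoc, hv]
    _ ≈₀ fun n ↦ w n * d := hxw.mul_const d

end Polar

section CentralPartition

/-- The sequences `p i` represent a partition of unity by orthogonal projections in the central
sequence algebra: their defining relations hold asymptotically after multiplication by an arbitrary
element of `S`, which is the algebra itself or an ideal of a larger algebra. -/
structure IsCentralPartition {R ι : Type*} [NonUnitalNormedRing R] [StarRing R] [Fintype ι]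
    (S : Set R) (p : ι → ℕ → R) : Prop where
  isSelfAdjoint : ∀ i n, IsSelfAdjoint (p i n)
  norm_le_one : ∀ i n, ‖p i n‖ ≤ 1
  central : ∀ d ∈ S, ∀ i, Tendsto (fun n ↦ ‖p i n * d - d * p i n‖) atTop (𝓝 0)
  orthogonal : ∀ d ∈ S, ∀ i j, i ≠ j → Tendsto (fun n ↦ ‖p i n * p j n * d‖) atTop (𝓝 0)
  idempotent : ∀ d ∈ S, ∀ i, Tendsto (fun n ↦ ‖(p i n * p i n - p i n) * d‖) atTop (𝓝 0)
  sum : ∀ d ∈ S, Tendsto (fun n ↦ ‖(∑ i, p i n) * d - d‖) atTop (𝓝 0)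

namespace IsCentralPartition

section Ring

variable {R ι : Type*} [NonUnitalNormedRing R] [StarRing R] [Fintype ι] {S : Set R}
  {p : ι → ℕ → R} {d : R}

theorem mul_comm (hp : IsCentralPartition S p) (hd : d ∈ S) (i : ι) :
    (fun n ↦ p i n * d) ≈₀ fun n ↦ d * p i n :=
  hp.central d hd i

theorem mul_mul [DecidableEq ι] (hp : IsCentralPartition S p) (hd : d ∈ S) (i j : ι) :
    (fun n ↦ p i n * (p j n * d)) ≈₀ fun n ↦ if i = j then p i n * d else 0 := by
  rw [AsympEq]
  obtain rfl | hij := eq_or_ne i j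
  · simpa [sub_mul, mul_assoc] using hp.idempotent d hd i
  · simpa [hij, mul_assoc] using hp.orthogonal d hd i j hij

theorem sum_mul (hp : IsCentralPartition S p) (hd : d ∈ S) :
    (fun n ↦ ∑ i, p i n * d) ≈₀ fun _ ↦ d := by
  simpa only [AsympEq, ← Finset.sum_mul] using hp.sum d hd

theorem sum_mul_right (hp : IsCentralPartition S p) (hd : d ∈ S) :
    (fun n ↦ ∑ i, d * p i n) ≈₀ fun _ ↦ d :=
  (AsympEq.sum fun i _ ↦ hp.mul_comm hd i).symm.trans (hp.sum_mul hd)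

theorem mul_mul_comm (hp : IsCentralPartition S p) (hS : ∀ m, ∀ d ∈ S, m * d ∈ S) (m : R)
    (hd : d ∈ S) (i : ι) : (fun n ↦ m * (p i n * d)) ≈₀ fun n ↦ p i n * (m * d) :=
  calc (fun n ↦ m * (p i n * d))
      ≈₀ fun n ↦ m * (d * p i n) := (hp.mul_comm hd i).const_mul m
    _ = fun n ↦ m * d * p i n := funext fun _ ↦ (mul_assoc _ _ _).symm
    _ ≈₀ fun n ↦ p i n * (m * d) := (hp.mul_comm (hS m d hd) i).symm

theorem mul_sum_mul (hp : IsCentralPartition S p) (hS : ∀ m, ∀ d ∈ S, m * d ∈ S) (m : ι → R)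
    (hd : d ∈ S) (i : ι) :
    (fun n ↦ p i n * ∑ j, m j * (p j n * d)) ≈₀ fun n ↦ p i n * (m i * d) := by
  classical
  calc (fun n ↦ p i n * ∑ j, m j * (p j n * d))
      ≈₀ fun n ↦ p i n * ∑ j, p j n * (m j * d) :=
        (AsympEq.sum fun j _ ↦ hp.mul_mul_comm hS (m j) hd j).mul_left_of_norm_le
          (hp.norm_le_one i)
    _ = fun n ↦ ∑ j, p i n * (p j n * (m j * d)) := funext fun _ ↦ Finset.mul_sum _ _ _
    _ ≈₀ fun n ↦ ∑ j, if i = j then p i n * (m j * d) else 0 :=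
        AsympEq.sum fun j _ ↦ hp.mul_mul (hS _ d hd) i j
    _ = fun n ↦ p i n * (m i * d) := by simp

theorem sum_mul_mul (hp : IsCentralPartition S p) (m : ι → R) (hd : d ∈ S) (i : ι) :
    (fun n ↦ (∑ j, m j * p j n) * (p i n * d)) ≈₀ fun n ↦ m i * (p i n * d) := by
  classical
  calc (fun n ↦ (∑ j, m j * p j n) * (p i n * d))
      = fun n ↦ ∑ j, m j * (p j n * (p i n * d)) := by simp only [Finset.sum_mul, mul_assoc]
    _ ≈₀ fun n ↦ ∑ j, m j * if j = i then p j n * d else 0 :=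
        AsympEq.sum fun j _ ↦ (hp.mul_mul hd j i).const_mul (m j)
    _ = fun n ↦ m i * (p i n * d) := by simp

theorem map {R' F : Type*} [NonUnitalNormedRing R'] [StarRing R'] [FunLike F R R']
    [NonUnitalRingHomClass F R R'] [StarHomClass F R R'] (hp : IsCentralPartition S p) (φ : F)
    (hφ : ∀ x, ‖φ x‖ = ‖x‖) : IsCentralPartition (φ '' S) fun i n ↦ φ (p i n) where
  isSelfAdjoint i n := (hp.isSelfAdjoint i n).map φ
  norm_le_one i n := (hφ _).trans_le (hp.norm_le_one i n)
  central := Set.forall_mem_image.mpr fun d hd i ↦ by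
    simpa only [← map_mul, ← map_sub, hφ] using hp.central d hd i
  orthogonal := Set.forall_mem_image.mpr fun d hd i j hij ↦ by
    simpa only [← map_mul, hφ] using hp.orthogonal d hd i j hij
  idempotent := Set.forall_mem_image.mpr fun d hd i ↦ by
    simpa only [← map_mul, ← map_sub, hφ] using hp.idempotent d hd i
  sum := Set.forall_mem_image.mpr fun d hd ↦ by
    simpa only [← map_sum, ← map_mul, ← map_sub, hφ] using hp.sum d hd

end Ring

section Glue

variable {M ι : Type*} [CStarAlgebra M] [Fintype ι] {S : Set M} {p : ι → ℕ → M} {d : M}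

theorem star_sum_mul_sum_mul (hp : IsCentralPartition S p) (hS : ∀ m, ∀ d ∈ S, m * d ∈ S)
    (u : ι → unitary M) (hd : d ∈ S) :
    (fun n ↦ star (∑ i, u i * p i n) * ((∑ i, u i * p i n) * d)) ≈₀ fun _ ↦ d :=
  calc (fun n ↦ star (∑ i, u i * p i n) * ((∑ i, u i * p i n) * d))
      = fun n ↦ ∑ i, p i n * ∑ j, star (u i : M) * u j * (p j n * d) := funext fun n ↦ by
        rw [star_sum, Finset.sum_mul]
        simp only [star_mul, (hp.isSelfAdjoint _ _).star_eq, Finset.sum_mul,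
          Finset.mul_sum, mul_assoc]
    _ ≈₀ fun n ↦ ∑ i, p i n * (star (u i : M) * u i * d) :=
        AsympEq.sum fun i _ ↦ hp.mul_sum_mul hS (fun j ↦ star (u i : M) * u j) hd i
    _ = fun n ↦ ∑ i, p i n * d := by simp only [Unitary.coe_star_mul_self, one_mul]
    _ ≈₀ fun _ ↦ d := hp.sum_mul hd

theorem norm_sum_unitary_mul_le (hp : IsCentralPartition S p) (u : ι → unitary M) (n : ℕ) :
    ‖∑ i, u i * p i n‖ ≤ Fintype.card ι :=
  calc ‖∑ i, u i * p i n‖ ≤ ∑ _i : ι, (1 : ℝ) :=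
        norm_sum_le_of_le _ fun i _ ↦ by
          rw [CStarRing.norm_coe_unitary_mul]
          exact hp.norm_le_one i n
    _ = Fintype.card ι := by simp

theorem exists_unitary_mul_asympEq (hp : IsCentralPartition S p) (hS : ∀ m, ∀ d ∈ S, m * d ∈ S)
    (u : ι → unitary M) (hu : ∀ n, ∑ i, u i * p i n ∈ closure {x : M | IsUnit x}) :
    ∃ v : ℕ → unitary M, ∀ d ∈ S, ∀ i,
      (fun n ↦ v n * (p i n * d)) ≈₀ fun n ↦ u i * (p i n * d) := by
  obtain ⟨v, hv⟩ := exists_unitary_mul_asympEq_of_mem_closure (hp.norm_sum_unitary_mul_le u) hu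
  refine ⟨v, fun d hd i ↦ ?_⟩
  calc (fun n ↦ v n * (p i n * d))
      ≈₀ fun n ↦ v n * (d * p i n) :=
        (hp.mul_comm hd i).mul_left_of_norm_le fun n ↦ norm_le_one_of_mem_unitary (v n).2
    _ = fun n ↦ v n * d * p i n := funext fun _ ↦ (mul_assoc _ _ _).symm
    _ ≈₀ fun n ↦ (∑ i, u i * p i n) * d * p i n :=
        (hv d (hp.star_sum_mul_sum_mul hS u hd)).mul_right_of_norm_le (hp.norm_le_one i)
    _ = fun n ↦ (∑ i, u i * p i n) * (d * p i n) := funext fun _ ↦ mul_assoc _ _ _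
    _ ≈₀ fun n ↦ (∑ i, u i * p i n) * (p i n * d) :=
        (hp.mul_comm hd i).symm.mul_left_of_norm_le (hp.norm_sum_unitary_mul_le u)
    _ ≈₀ fun n ↦ u i * (p i n * d) := hp.sum_mul_mul (fun i ↦ u i) hd i

theorem conj_asympEq (hp : IsCentralPartition S p) (hS : ∀ m, ∀ d ∈ S, m * d ∈ S)
    (hstar : ∀ d ∈ S, star d ∈ S) {u : M} {v : ℕ → unitary M} {i : ι}
    (hv : ∀ d ∈ S, (fun n ↦ v n * (p i n * d)) ≈₀ fun n ↦ u * (p i n * d)) (hd : d ∈ S) :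
    (fun n ↦ v n * (p i n * d) * star (v n : M)) ≈₀ fun n ↦ u * d * star u * p i n := by
  have hvstar : ∀ n, ‖star (v n : M)‖ ≤ 1 := fun n ↦ norm_le_one_of_mem_unitary (star (v n)).2
  have hd_star : d * star u ∈ S := by simpa using hstar _ (hS u _ (hstar d hd))
  calc (fun n ↦ v n * (p i n * d) * star (v n : M))
      ≈₀ fun n ↦ u * (p i n * d) * star (v n : M) := (hv d hd).mul_right_of_norm_le hvstar
    _ ≈₀ fun n ↦ u * (d * p i n) * star (v n : M) :=
        ((hp.mul_comm hd i).const_mul u).mul_right_of_norm_le hvstar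
    _ = fun n ↦ u * star (v n * (p i n * star d)) := by
        simp only [star_mul, star_star, (hp.isSelfAdjoint _ _).star_eq, mul_assoc]
    _ ≈₀ fun n ↦ u * star (u * (p i n * star d)) := (hv _ (hstar d hd)).star.const_mul u
    _ = fun n ↦ u * (d * p i n * star u) := by
        simp only [star_mul, star_star, (hp.isSelfAdjoint _ _).star_eq]
    _ ≈₀ fun n ↦ u * (p i n * d * star u) :=
        ((hp.mul_comm hd i).symm.mul_const (star u)).const_mul u
    _ = fun n ↦ u * (p i n * (d * star u)) := by simp only [mul_assoc]
    _ ≈₀ fun n ↦ u * (d * star u * p i n) := (hp.mul_comm hd_star i).const_mul u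
    _ = fun n ↦ u * d * star u * p i n := by simp only [mul_assoc]

end Glue

end IsCentralPartition

end CentralPartition

section Multiplier

variable {A : Type*} [NonUnitalCStarAlgebra A]

/-- The inclusion of `A` into its multiplier algebra. -/
noncomputable abbrev multiplierCoe : A →⋆ₙₐ[ℂ] 𝓜(ℂ, A) :=
  DoubleCentralizer.coeHom

theorem multiplierCoe_injective : Function.Injective (multiplierCoe (A := A)) := by
  refine (injective_iff_map_eq_zero (multiplierCoe (A := A))).mpr fun a ha ↦ ?_
  have hmul : a * star a = 0 := congrArg (fun m : 𝓜(ℂ, A) ↦ m.fst (star a)) ha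
  exact (CStarRing.mul_star_self_eq_zero_iff a).mp hmul

theorem norm_multiplierCoe (a : A) : ‖multiplierCoe a‖ = ‖a‖ :=
  NonUnitalStarAlgHom.norm_map multiplierCoe multiplierCoe_injective a

theorem multiplier_fst_mul (m : 𝓜(ℂ, A)) (a b : A) : m.fst (a * b) = m.fst a * b := by
  have h : ∀ x : A, x * (m.fst (a * b) - m.fst a * b) = 0 := fun x ↦ by
    rw [mul_sub, ← m.central, ← mul_assoc, ← mul_assoc, m.central, sub_self]
  exact sub_eq_zero.mp (CStarRing.star_mul_self_eq_zero_iff _ |>.mp (h _))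

theorem multiplier_snd_mul (m : 𝓜(ℂ, A)) (a b : A) : m.snd (a * b) = a * m.snd b := by
  have h : ∀ x : A, (m.snd (a * b) - a * m.snd b) * x = 0 := fun x ↦ by
    rw [sub_mul, m.central, mul_assoc, mul_assoc, m.central, sub_self]
  exact sub_eq_zero.mp (CStarRing.mul_star_self_eq_zero_iff _ |>.mp (h _))

theorem multiplierCoe_fst (m : 𝓜(ℂ, A)) (a : A) : multiplierCoe (m.fst a) = m * multiplierCoe a :=
  DoubleCentralizer.ext _ _ _ _ <| Prod.ext
    (ContinuousLinearMap.ext fun x ↦ (multiplier_fst_mul m a x).symm)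
    (ContinuousLinearMap.ext fun x ↦ (m.central x a).symm)

theorem multiplierCoe_snd (m : 𝓜(ℂ, A)) (a : A) : multiplierCoe (m.snd a) = multiplierCoe a * m :=
  DoubleCentralizer.ext _ _ _ _ <| Prod.ext
    (ContinuousLinearMap.ext fun x ↦ m.central a x)
    (ContinuousLinearMap.ext fun x ↦ (multiplier_snd_mul m x a).symm)

theorem multiplierCoe_snd_star_fst (u : unitary 𝓜(ℂ, A)) (a : A) :
    multiplierCoe ((star (u : 𝓜(ℂ, A))).snd ((u : 𝓜(ℂ, A)).fst a)) =
      Unitary.conjStarAlgAut ℂ _ u (multiplierCoe a) := by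
  rw [multiplierCoe_snd, multiplierCoe_fst, Unitary.conjStarAlgAut_apply]

/-- The automorphism `a ↦ u * a * star u` of `A` given by a unitary multiplier `u`. -/
noncomputable def innerAut : unitary 𝓜(ℂ, A) →* (A ≃⋆ₐ[ℂ] A) where
  toFun u :=
    { toFun := fun a ↦ (star (u : 𝓜(ℂ, A))).snd ((u : 𝓜(ℂ, A)).fst a)
      invFun := fun a ↦ (star ((star u : unitary 𝓜(ℂ, A)) : 𝓜(ℂ, A))).snd
        (((star u : unitary 𝓜(ℂ, A)) : 𝓜(ℂ, A)).fst a)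
      left_inv := fun a ↦ multiplierCoe_injective <| by
        simp only [multiplierCoe_snd_star_fst, ← StarAlgEquiv.mul_apply, ← map_mul,
          Unitary.star_mul_self, map_one, StarAlgEquiv.one_apply]
      right_inv := fun a ↦ multiplierCoe_injective <| by
        simp only [multiplierCoe_snd_star_fst, ← StarAlgEquiv.mul_apply, ← map_mul,
          Unitary.mul_star_self, map_one, StarAlgEquiv.one_apply]
      map_mul' := fun a b ↦ multiplierCoe_injective <| by
        simp only [map_mul, multiplierCoe_snd_star_fst]
      map_add' := fun a b ↦ by simp only [map_add]
      map_star' := fun a ↦ multiplierCoe_injective <| by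
        simp only [map_star, multiplierCoe_snd_star_fst]
      map_smul' := fun c a ↦ by simp only [map_smul] }
  map_one' := StarAlgEquiv.ext fun a ↦ by simp
  map_mul' u v := StarAlgEquiv.ext fun a ↦ multiplierCoe_injective <|
    (multiplierCoe_snd_star_fst (u * v) a).trans <| by
      rw [map_mul, StarAlgEquiv.mul_apply, ← multiplierCoe_snd_star_fst v,
        ← multiplierCoe_snd_star_fst u]
      rfl

theorem multiplierCoe_innerAut (u : unitary 𝓜(ℂ, A)) (a : A) :
    multiplierCoe (innerAut u a) = u * multiplierCoe a * star (u : 𝓜(ℂ, A)) :=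
  (multiplierCoe_snd_star_fst u a).trans (Unitary.conjStarAlgAut_apply u _)

/-- An automorphism of `A` as a continuous linear map, the form in which a double centralizer
stores its components. -/
noncomputable def autCLM (γ : A ≃⋆ₐ[ℂ] A) : A →L[ℂ] A :=
  ⟨(γ : A →ₗ[ℂ] A), (StarAlgEquiv.isometry γ).continuous⟩

@[simp]
theorem autCLM_apply (γ : A ≃⋆ₐ[ℂ] A) (a : A) : autCLM γ a = γ a :=
  rfl

/-- The extension of an automorphism of `A` to its multiplier algebra. -/
noncomputable def multiplierMap (γ : A ≃⋆ₐ[ℂ] A) : 𝓜(ℂ, A) →⋆* 𝓜(ℂ, A) where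
  toFun m :=
    { fst := autCLM γ ∘L m.fst ∘L autCLM γ.symm
      snd := autCLM γ ∘L m.snd ∘L autCLM γ.symm
      central x y := by simpa using congrArg γ (m.central (γ.symm x) (γ.symm y)) }
  map_one' := DoubleCentralizer.ext _ _ _ _ <| Prod.ext (by ext; simp) (by ext; simp)
  map_mul' m m' := DoubleCentralizer.ext _ _ _ _ <| Prod.ext (by ext; simp) (by ext; simp)
  map_star' m := DoubleCentralizer.ext _ _ _ _ <| Prod.ext
    (by ext; simp [DoubleCentralizer.star_fst, map_star])
    (by ext; simp [DoubleCentralizer.star_snd, map_star])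

theorem conj_innerAut (γ : A ≃⋆ₐ[ℂ] A) (u : unitary 𝓜(ℂ, A)) :
    γ * innerAut u * γ⁻¹ = innerAut (Unitary.map (multiplierMap γ) u) := by
  ext a
  change γ ((star (u : 𝓜(ℂ, A))).snd ((u : 𝓜(ℂ, A)).fst (γ.symm a))) =
    (star (multiplierMap γ u)).snd ((multiplierMap γ u).fst a)
  rw [← map_star]
  change _ = γ ((star (u : 𝓜(ℂ, A))).snd (γ.symm (γ ((u : 𝓜(ℂ, A)).fst (γ.symm a)))))
  rw [StarAlgEquiv.symm_apply_apply]

variable (A) in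
/-- The group of automorphisms of `A` of the form `a ↦ u * a * star u` with `u` a unitary
multiplier. -/
noncomputable abbrev innerAutGroup : Subgroup (A ≃⋆ₐ[ℂ] A) :=
  (innerAut (A := A)).range

instance innerAutGroup_normal : (innerAutGroup A).Normal where
  conj_mem := by
    rintro _ ⟨u, rfl⟩ γ
    exact ⟨_, (conj_innerAut γ u).symm⟩

theorem mul_mem_image_multiplierCoe (m : 𝓜(ℂ, A)) :
    ∀ d ∈ multiplierCoe '' Set.univ, m * d ∈ multiplierCoe '' Set.univ :=
  Set.forall_mem_image.mpr fun a _ ↦ ⟨m.fst a, trivial, multiplierCoe_fst m a⟩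

theorem multiplierCoe_mem_closure_isUnit {a : A}
    (ha : (a : Unitization ℂ A) ∈ closure {x : Unitization ℂ A | IsUnit x}) :
    multiplierCoe a ∈ closure {x : 𝓜(ℂ, A) | IsUnit x} := by
  let φ : Unitization ℂ A →⋆ₐ[ℂ] 𝓜(ℂ, A) := Unitization.starLift multiplierCoe
  have hφ : Continuous φ :=
    AddMonoidHomClass.continuous_of_bound φ 1 fun x ↦ by
      simpa using NonUnitalStarAlgHom.norm_apply_le φ x
  have hφa : φ a = multiplierCoe a :=
    DFunLike.congr_fun (Unitization.starLift.symm_apply_apply (multiplierCoe (A := A))) a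
  exact hφa ▸ map_mem_closure hφ ha fun x hx ↦ IsUnit.map φ hx

end Multiplier

section Gluing

variable {A κ : Type*} [NonUnitalCStarAlgebra A] {f : κ → ℕ → A}

theorem AsympEq.map_aut {x y : ℕ → A} (h : x ≈₀ y) (σ : ℕ → A ≃⋆ₐ[ℂ] A) :
    (fun n ↦ σ n (x n)) ≈₀ fun n ↦ σ n (y n) :=
  h.of_norm_sub_le fun n ↦ by rw [← map_sub, StarAlgEquiv.norm_map]

/-- The automorphisms `σ n` asymptotically act like `τ k` on the `k`-th member of the central
partition `f`. -/
def IsGluing (f : κ → ℕ → A) (τ : κ → A ≃⋆ₐ[ℂ] A) (σ : ℕ → A ≃⋆ₐ[ℂ] A) : Prop :=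
  ∀ k d, (fun n ↦ σ n (f k n * d)) ≈₀ fun n ↦ τ k d * f k n

variable [Fintype κ]

theorem IsCentralPartition.exists_isGluing (hf : IsCentralPartition Set.univ f)
    (hGL : ∀ a : A, multiplierCoe a ∈ closure {x : 𝓜(ℂ, A) | IsUnit x})
    {τ : κ → A ≃⋆ₐ[ℂ] A} (hτ : ∀ k, τ k ∈ innerAutGroup A) :
    ∃ σ : ℕ → A ≃⋆ₐ[ℂ] A, (∀ n, σ n ∈ innerAutGroup A) ∧ IsGluing f τ σ := by
  choose u hu using hτ
  have hf_coe := hf.map (multiplierCoe (A := A)) norm_multiplierCoe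
  have hstar : ∀ d ∈ multiplierCoe (A := A) '' Set.univ, star d ∈ multiplierCoe '' Set.univ :=
    Set.forall_mem_image.mpr fun a _ ↦ ⟨star a, trivial, map_star _ a⟩
  have hu_mem : ∀ n, ∑ k, u k * multiplierCoe (f k n) ∈ closure {x : 𝓜(ℂ, A) | IsUnit x} :=
    fun n ↦ by
      simpa only [map_sum, multiplierCoe_fst] using hGL (∑ k, (u k : 𝓜(ℂ, A)).fst (f k n))
  obtain ⟨v, hv⟩ := hf_coe.exists_unitary_mul_asympEq mul_mem_image_multiplierCoe u hu_mem
  refine ⟨fun n ↦ innerAut (v n), fun n ↦ ⟨v n, rfl⟩, fun k a ↦ ?_⟩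
  have hconj := hf_coe.conj_asympEq mul_mem_image_multiplierCoe hstar
    (fun d hd ↦ hv d hd k) (Set.mem_image_of_mem _ (Set.mem_univ a))
  have hcoe : ∀ n, multiplierCoe (innerAut (v n) (f k n * a) - τ k a * f k n) =
      v n * (multiplierCoe (f k n) * multiplierCoe a) * star (v n : 𝓜(ℂ, A)) -
        u k * multiplierCoe a * star (u k : 𝓜(ℂ, A)) * multiplierCoe (f k n) := fun n ↦ by
    rw [map_sub, map_mul multiplierCoe (τ k a), ← hu, multiplierCoe_innerAut,
      multiplierCoe_innerAut, map_mul multiplierCoe]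
  exact hconj.of_norm_sub_le fun n ↦ ((norm_multiplierCoe _).symm.trans (congrArg norm (hcoe n))).le

namespace IsGluing

variable {τ : κ → A ≃⋆ₐ[ℂ] A} {σ : ℕ → A ≃⋆ₐ[ℂ] A}

theorem apply_asympEq (hσ : IsGluing f τ σ) (hf : IsCentralPartition Set.univ f) (a : A) :
    (fun n ↦ σ n a) ≈₀ fun n ↦ ∑ k, τ k a * f k n :=
  calc (fun n ↦ σ n a)
      ≈₀ fun n ↦ σ n (∑ k, f k n * a) := (hf.sum_mul (Set.mem_univ a)).symm.map_aut σ
    _ = fun n ↦ ∑ k, σ n (f k n * a) := by simp only [map_sum]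
    _ ≈₀ fun n ↦ ∑ k, τ k a * f k n := AsympEq.sum fun k _ ↦ hσ k a

theorem symm_apply_asympEq (hσ : IsGluing f τ σ) (hf : IsCentralPartition Set.univ f) (a : A) :
    (fun n ↦ (σ n).symm a) ≈₀ fun n ↦ ∑ k, f k n * (τ k).symm a :=
  calc (fun n ↦ (σ n).symm a)
      ≈₀ fun n ↦ (σ n).symm (∑ k, a * f k n) :=
        (hf.sum_mul_right (Set.mem_univ a)).symm.map_aut fun n ↦ (σ n).symm
    _ = fun n ↦ (σ n).symm (∑ k, τ k ((τ k).symm a) * f k n) := by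
        simp only [StarAlgEquiv.apply_symm_apply]
    _ ≈₀ fun n ↦ (σ n).symm (∑ k, σ n (f k n * (τ k).symm a)) :=
        (AsympEq.sum fun k _ ↦ hσ k _).symm.map_aut fun n ↦ (σ n).symm
    _ = fun n ↦ ∑ k, f k n * (τ k).symm a := by
        simp only [map_sum, StarAlgEquiv.symm_apply_apply]

end IsGluing

theorem IsCentralPartition.eventually_norm_sub_lt (hf : IsCentralPartition Set.univ f)
    {x : ℕ → A} {e : κ → A} {b : A} {δ ε : ℝ} (hx : x ≈₀ fun n ↦ ∑ k, e k * f k n)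
    (he : ∀ k, ‖e k - b‖ ≤ δ) (hδ : Fintype.card κ * δ < ε) : ∀ᶠ n in atTop, ‖x n - b‖ < ε := by
  have hdiff : ∀ n, ‖∑ k, e k * f k n - ∑ k, b * f k n‖ ≤ Fintype.card κ * δ := fun n ↦
    calc ‖∑ k, e k * f k n - ∑ k, b * f k n‖ = ‖∑ k, (e k - b) * f k n‖ := by
          simp only [sub_mul, Finset.sum_sub_distrib]
      _ ≤ ∑ _k : κ, δ := norm_sum_le_of_le _ fun k _ ↦
          (norm_mul_le_of_le (he k) (hf.norm_le_one k n)).trans_eq (mul_one δ)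
      _ = Fintype.card κ * δ := by simp
  have hlim : Tendsto (fun n ↦ ‖x n - ∑ k, e k * f k n‖ + ‖∑ k, b * f k n - b‖) atTop (𝓝 0) := by
    simpa using Tendsto.add hx (hf.sum_mul_right (Set.mem_univ b))
  filter_upwards [hlim.eventually_lt_const (sub_pos.mpr hδ)] with n hn
  linarith [hdiff n, norm_sub_le_norm_sub_add_norm_sub (x n) (∑ k, e k * f k n) b,
    norm_sub_le_norm_sub_add_norm_sub (∑ k, e k * f k n) (∑ k, b * f k n) b]

theorem IsGluing.eventually_norm_apply_sub_lt {τ : κ → A ≃⋆ₐ[ℂ] A} {σ : ℕ → A ≃⋆ₐ[ℂ] A}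
    {F : Set A} {δ ε : ℝ} (hσ : IsGluing f τ σ) (hf : IsCentralPartition Set.univ f)
    (hF : F.Finite) (hτ : ∀ a ∈ F, ∀ k, ‖τ k a - a‖ < δ) (hδ : Fintype.card κ * δ < ε) :
    ∀ᶠ n in atTop, ∀ a ∈ F, ‖σ n a - a‖ < ε :=
  (eventually_all_finite hF).mpr fun a ha ↦
    hf.eventually_norm_sub_lt (hσ.apply_asympEq hf a) (fun k ↦ (hτ a ha k).le) hδ

end Gluing

section RohlinTower

variable {A G : Type*} [NonUnitalCStarAlgebra A] [Group G]

/-- The conjugate `g ↦ σ * α g * σ⁻¹` of an action by an automorphism. -/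
def conjAction (σ : A ≃⋆ₐ[ℂ] A) (α : G →* (A ≃⋆ₐ[ℂ] A)) : G →* (A ≃⋆ₐ[ℂ] A) :=
  (MulAut.conj σ).toMonoidHom.comp α

theorem conjAction_apply (σ : A ≃⋆ₐ[ℂ] A) (α : G →* (A ≃⋆ₐ[ℂ] A)) (g : G) (a : A) :
    conjAction σ α g a = σ (α g (σ.symm a)) :=
  rfl

theorem conjAction_mul (σ τ : A ≃⋆ₐ[ℂ] A) (α : G →* (A ≃⋆ₐ[ℂ] A)) :
    conjAction (σ * τ) α = conjAction σ (conjAction τ α) :=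
  rfl

theorem conjAction_one (α : G →* (A ≃⋆ₐ[ℂ] A)) : conjAction 1 α = α :=
  rfl

/-- The sequences `f k`, for `k : G`, represent the Rohlin projections of the action `β` in the
central sequence algebra. -/
structure IsRohlinTower [Fintype G] (β : G →* (A ≃⋆ₐ[ℂ] A)) (f : G → ℕ → A) : Prop
    extends IsCentralPartition Set.univ f where
  equivariant : ∀ a g h, Tendsto (fun n ↦ ‖(β g (f h n) - f (g * h) n) * a‖) atTop (𝓝 0)

variable [Fintype G] {β : G →* (A ≃⋆ₐ[ℂ] A)} {f : G → ℕ → A}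

namespace IsRohlinTower

theorem apply_mul (hf : IsRohlinTower β f) (g h : G) (a : A) :
    (fun n ↦ β g (f h n) * a) ≈₀ fun n ↦ f (g * h) n * a := by
  simpa only [AsympEq, ← sub_mul] using hf.equivariant a g h

theorem conj (hf : IsRohlinTower β f) (σ : A ≃⋆ₐ[ℂ] A) :
    IsRohlinTower (conjAction σ β) fun k n ↦ σ (f k n) where
  toIsCentralPartition := Set.image_univ_of_surjective σ.surjective ▸
    hf.toIsCentralPartition.map σ (StarAlgEquiv.norm_map σ)
  equivariant a g h := by
    refine (hf.equivariant (σ.symm a) g h).congr fun n ↦ ?_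
    rw [← StarAlgEquiv.norm_map σ]
    simp [conjAction_apply]

theorem conjAction_asympEq (hf : IsRohlinTower β f) {τ : G → A ≃⋆ₐ[ℂ] A} {σ : ℕ → A ≃⋆ₐ[ℂ] A}
    (hσ : IsGluing f τ σ) (h : G) (a : A) :
    (fun n ↦ conjAction (σ n) β h a) ≈₀
      fun n ↦ ∑ k, τ k (β h ((τ (h⁻¹ * k)).symm a)) * f k n :=
  calc (fun n ↦ σ n (β h ((σ n).symm a)))
      ≈₀ fun n ↦ σ n (β h (∑ k, f k n * (τ k).symm a)) :=
        ((hσ.symm_apply_asympEq hf.toIsCentralPartition a).map_aut fun _ ↦ β h).map_aut σ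
    _ = fun n ↦ σ n (∑ k, β h (f k n) * β h ((τ k).symm a)) := by simp only [map_sum, map_mul]
    _ ≈₀ fun n ↦ σ n (∑ k, f (h * k) n * β h ((τ k).symm a)) :=
        (AsympEq.sum fun k _ ↦ hf.apply_mul h k _).map_aut σ
    _ = fun n ↦ ∑ k, σ n (f (h * k) n * β h ((τ k).symm a)) := by simp only [map_sum]
    _ ≈₀ fun n ↦ ∑ k, τ (h * k) (β h ((τ k).symm a)) * f (h * k) n :=
        AsympEq.sum fun k _ ↦ hσ (h * k) _
    _ = fun n ↦ ∑ k, τ k (β h ((τ (h⁻¹ * k)).symm a)) * f k n := funext fun n ↦ by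
        simpa using Equiv.sum_comp (Equiv.mulLeft h)
          fun k ↦ τ k (β h ((τ (h⁻¹ * k)).symm a)) * f k n

end IsRohlinTower

end RohlinTower

section ApproxUnitarilyEquiv

variable {A : Type*} [NonUnitalCStarAlgebra A]

theorem norm_aut_apply_sub (σ : A ≃⋆ₐ[ℂ] A) (a b : A) : ‖σ a - b‖ = ‖a - σ.symm b‖ := by
  rw [← StarAlgEquiv.norm_map σ (a - σ.symm b), map_sub, StarAlgEquiv.apply_symm_apply]

/-- Approximate unitary equivalence of two automorphisms, via unitary multipliers. An automorphism
is approximately inner if it is approximately unitarily equivalent to `1`. -/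
def ApproxUnitarilyEquiv (φ ψ : A ≃⋆ₐ[ℂ] A) : Prop :=
  ∀ F : Set A, F.Finite → ∀ δ > 0, ∃ σ ∈ innerAutGroup A, ∀ a ∈ F, ‖σ (ψ a) - φ a‖ < δ

namespace ApproxUnitarilyEquiv

variable {φ ψ σ : A ≃⋆ₐ[ℂ] A}

theorem symm (h : ApproxUnitarilyEquiv φ ψ) : ApproxUnitarilyEquiv ψ φ := fun F hF δ hδ ↦ by
  obtain ⟨σ, hσ, hF⟩ := h F hF δ hδ
  refine ⟨σ⁻¹, inv_mem hσ, fun a ha ↦ ?_⟩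
  rw [norm_sub_rev, StarAlgEquiv.aut_inv, ← norm_aut_apply_sub]
  exact hF a ha

theorem conj_right (h : ApproxUnitarilyEquiv φ ψ) (hσ : σ ∈ innerAutGroup A) :
    ApproxUnitarilyEquiv φ (σ * ψ * σ⁻¹) := fun F hF δ hδ ↦ by
  obtain ⟨τ, hτ, hF⟩ := h F hF δ hδ
  refine ⟨τ * (ψ * σ * ψ⁻¹) * σ⁻¹,
    mul_mem (mul_mem hτ (innerAutGroup_normal.conj_mem σ hσ ψ)) (inv_mem hσ), ?_⟩
  have heq : τ * (ψ * σ * ψ⁻¹) * σ⁻¹ * (σ * ψ * σ⁻¹) = τ * ψ := by group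
  simpa only [← StarAlgEquiv.mul_apply, heq] using hF

theorem conj_left (h : ApproxUnitarilyEquiv φ ψ) (hσ : σ ∈ innerAutGroup A) :
    ApproxUnitarilyEquiv (σ * φ * σ⁻¹) ψ :=
  (h.symm.conj_right hσ).symm

end ApproxUnitarilyEquiv

end ApproxUnitarilyEquiv

section CloseActions

variable {A G : Type*} [NonUnitalCStarAlgebra A] [Group G] {α β : G →* (A ≃⋆ₐ[ℂ] A)}
  {τ : G → A ≃⋆ₐ[ℂ] A} {a : A} {F F₀ : Set A} {δ ε η : ℝ}

/-- The actions `α` and `β` differ by less than `ε` on the set `F`. -/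
def ActionsCloseOn (F : Set A) (ε : ℝ) (α β : G →* (A ≃⋆ₐ[ℂ] A)) : Prop :=
  ∀ g, ∀ a ∈ F, ‖α g a - β g a‖ < ε

namespace ActionsCloseOn

theorem symm (h : ActionsCloseOn F ε α β) : ActionsCloseOn F ε β α := fun g a ha ↦ by
  rw [norm_sub_rev]
  exact h g a ha

theorem mono {F' : Set A} {ε' : ℝ} (h : ActionsCloseOn F' ε' α β) (hF : F ⊆ F') (hε : ε' ≤ ε) :
    ActionsCloseOn F ε α β := fun g a ha ↦
  (h g a (hF ha)).trans_le hε

end ActionsCloseOn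

theorem action_apply_apply (α : G →* (A ≃⋆ₐ[ℂ] A)) (g h : G) (a : A) :
    α g (α h a) = α (g * h) a := by
  rw [map_mul, StarAlgEquiv.mul_apply]

theorem norm_mul_inv_apply_sub_lt
    (hτ : ∀ g k, ‖τ g (β g (α k⁻¹ a)) - α g (α k⁻¹ a)‖ < δ) (g h : G) :
    ‖τ (g * h) (β g ((τ h).symm a)) - α g a‖ < 2 * δ := by
  have hh : ‖τ h (β h (α h⁻¹ a)) - a‖ < δ := by
    simpa only [action_apply_apply α, mul_inv_cancel, map_one, StarAlgEquiv.one_apply] using hτ h h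
  have hgh : ‖τ (g * h) (β (g * h) (α h⁻¹ a)) - α g a‖ < δ := by
    simpa only [action_apply_apply, mul_inv_cancel_right] using hτ (g * h) h
  have hle : ‖τ (g * h) (β g ((τ h).symm a)) - τ (g * h) (β (g * h) (α h⁻¹ a))‖ < δ := by
    rwa [← action_apply_apply β, ← map_sub, ← map_sub, StarAlgEquiv.norm_map,
      StarAlgEquiv.norm_map, norm_sub_rev, ← norm_aut_apply_sub]
  linarith [norm_sub_le_norm_sub_add_norm_sub (τ (g * h) (β g ((τ h).symm a)))
    (τ (g * h) (β (g * h) (α h⁻¹ a))) (α g a)]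

theorem norm_apply_sub_lt {g : G} (hτ : ‖τ g (β g (β g⁻¹ a)) - α g (β g⁻¹ a)‖ < δ)
    (hβα : ‖β g⁻¹ a - α g⁻¹ a‖ < η) : ‖τ g a - a‖ < δ + η := by
  have hα : ‖α g (β g⁻¹ a) - a‖ < η := by
    rw [← StarAlgEquiv.norm_map (α g), map_sub] at hβα
    simpa only [action_apply_apply α g g⁻¹, mul_inv_cancel, map_one, StarAlgEquiv.one_apply]
      using hβα
  rw [action_apply_apply β, mul_inv_cancel, map_one, StarAlgEquiv.one_apply] at hτ
  linarith [norm_sub_le_norm_sub_add_norm_sub (τ g a) (α g (β g⁻¹ a)) a]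

variable [Fintype G] {f : G → ℕ → A} {σ : ℕ → A ≃⋆ₐ[ℂ] A}

theorem IsRohlinTower.eventually_actionsCloseOn (hf : IsRohlinTower β f) (hσ : IsGluing f τ σ)
    (hF : F.Finite) (hτ : ∀ a ∈ F, ∀ g k, ‖τ g (β g (α k⁻¹ a)) - α g (α k⁻¹ a)‖ < δ)
    (hδ : Fintype.card G * (2 * δ) < ε) :
    ∀ᶠ n in atTop, ActionsCloseOn F ε (conjAction (σ n) β) α := by
  simp only [ActionsCloseOn, eventually_all, eventually_all_finite hF]
  exact fun g a ha ↦ hf.eventually_norm_sub_lt (hf.conjAction_asympEq hσ g a)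
    (fun k ↦ by simpa using (norm_mul_inv_apply_sub_lt (hτ a ha) g (g⁻¹ * k)).le) hδ

theorem IsRohlinTower.exists_conj_close (hf : IsRohlinTower β f)
    (hGL : ∀ a : A, multiplierCoe a ∈ closure {x : 𝓜(ℂ, A) | IsUnit x})
    (hαβ : ∀ g, ApproxUnitarilyEquiv (α g) (β g)) (hF : F.Finite) (hF₀ : F₀.Finite) (hε : 0 < ε)
    (hη : 0 < η) (hclose : ActionsCloseOn F₀ η β α) :
    ∃ σ ∈ innerAutGroup A, ActionsCloseOn F ε (conjAction σ β) α ∧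
      ∀ a ∈ F₀, ‖σ a - a‖ < 2 * Fintype.card G * η := by
  have hcard : (0 : ℝ) < Fintype.card G := by exact_mod_cast Fintype.card_pos
  obtain ⟨δ, hδ, hδη, hδε⟩ : ∃ δ > 0, δ < η ∧ δ < ε / (Fintype.card G * 2) :=
    (exists_between (lt_min hη (by positivity))).imp fun δ h ↦ ⟨h.1, lt_min_iff.mp h.2⟩
  have hE : (⋃ k, α k⁻¹ '' F ∪ β k⁻¹ '' F₀).Finite :=
    Set.finite_iUnion fun k ↦ (hF.image _).union (hF₀.image _)
  choose τ hτ hτE using fun g ↦ hαβ g _ hE δ hδ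
  obtain ⟨σ, hσ, hglue⟩ := hf.exists_isGluing hGL hτ
  have hclose_ev : ∀ᶠ n in atTop, ActionsCloseOn F ε (conjAction (σ n) β) α :=
    hf.eventually_actionsCloseOn hglue hF (δ := δ)
      (fun a ha g k ↦ hτE g _ (Set.mem_iUnion.mpr ⟨k, .inl ⟨a, ha, rfl⟩⟩))
      (by rwa [← mul_assoc, ← lt_div_iff₀' (by positivity)])
  have hfix_ev : ∀ᶠ n in atTop, ∀ a ∈ F₀, ‖σ n a - a‖ < 2 * Fintype.card G * η :=
    hglue.eventually_norm_apply_sub_lt hf.toIsCentralPartition hF₀ (δ := δ + η)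
      (fun a ha k ↦ norm_apply_sub_lt
        (hτE k _ (Set.mem_iUnion.mpr ⟨k, .inr ⟨a, ha, rfl⟩⟩)) (hclose k⁻¹ a ha))
      (by nlinarith)
  obtain ⟨n, hn, hn₀⟩ := (hclose_ev.and hfix_ev).exists
  exact ⟨σ n, hσ n, hn, hn₀⟩

end CloseActions

section Intertwining

variable {A G : Type*} [NonUnitalCStarAlgebra A] [Group G] [Fintype G]
  {α β : G →* (A ≃⋆ₐ[ℂ] A)} {f f' : G → ℕ → A}

/-- The automorphisms `σ` and `τ`, as well as their inverses, differ by less than `ε` on the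
set `F`. -/
def AutsCloseOn (F : Set A) (ε : ℝ) (σ τ : A ≃⋆ₐ[ℂ] A) : Prop :=
  ∀ a ∈ F, ‖σ a - τ a‖ < ε ∧ ‖σ.symm a - τ.symm a‖ < ε

theorem AutsCloseOn.mul_left {F : Set A} {ε : ℝ} {σ τ : A ≃⋆ₐ[ℂ] A}
    (h : ∀ a ∈ F ∪ τ '' F, ‖σ a - a‖ < ε) : AutsCloseOn F ε (σ * τ) τ := fun a ha ↦ by
  refine ⟨h (τ a) (.inr ⟨a, ha, rfl⟩), ?_⟩
  change ‖τ.symm (σ.symm a) - τ.symm a‖ < ε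
  rw [← map_sub, StarAlgEquiv.norm_map, norm_sub_rev, ← norm_aut_apply_sub]
  exact h a (.inl ha)

theorem IsRohlinTower.exists_closer (hf : IsRohlinTower β f)
    (hGL : ∀ a : A, multiplierCoe a ∈ closure {x : 𝓜(ℂ, A) | IsUnit x})
    (hαβ : ∀ g, ApproxUnitarilyEquiv (α g) (β g)) {P Q : A ≃⋆ₐ[ℂ] A} (hP : P ∈ innerAutGroup A)
    (hQ : Q ∈ innerAutGroup A) {D D' : Set A} (hD : D.Finite) (hD' : D'.Finite) {ε η : ℝ}
    (hε : 0 < ε) (hη : 0 < η)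
    (hclose : ActionsCloseOn (D ∪ Q '' D) η (conjAction Q β) (conjAction P α)) :
    ∃ Q' ∈ innerAutGroup A,
      ActionsCloseOn (D' ∪ P '' D') ε (conjAction Q' β) (conjAction P α) ∧
        AutsCloseOn D (2 * Fintype.card G * η) Q' Q := by
  obtain ⟨σ, hσ, hclose', hfix⟩ := (hf.conj Q).exists_conj_close hGL
    (fun g ↦ ((hαβ g).conj_left hP).conj_right hQ) (hD'.union (hD'.image P))
    (hD.union (hD.image Q)) hε hη hclose
  exact ⟨σ * Q, mul_mem hσ hQ, hclose', AutsCloseOn.mul_left hfix⟩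

theorem exists_seq_of_forall_exists_succ {X : Type*} {p : ℕ → X → Prop} {r : ℕ → X → X → Prop}
    {x₀ : X} (h₀ : p 0 x₀) (hsucc : ∀ n x, p n x → ∃ y, p (n + 1) y ∧ r n x y) :
    ∃ s : ℕ → X, (∀ n, p n (s n)) ∧ ∀ n, r n (s n) (s (n + 1)) := by
  choose! next hp hr using hsucc
  have hs : ∀ n, p n (Nat.rec x₀ next n) := fun n ↦ by
    induction n with
    | zero => exact h₀
    | succ n ih => exact hp n _ ih
  exact ⟨fun n ↦ Nat.rec x₀ next n, hs, fun n ↦ hr n _ (hs n)⟩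

theorem IsRohlinTower.exists_intertwining (hf : IsRohlinTower α f) (hf' : IsRohlinTower β f')
    (hGL : ∀ a : A, multiplierCoe a ∈ closure {x : 𝓜(ℂ, A) | IsUnit x})
    (hαβ : ∀ g, ApproxUnitarilyEquiv (α g) (β g)) {D : ℕ → Set A} (hD₀ : D 0 = ∅)
    (hD : ∀ n, (D n).Finite) {ε : ℕ → ℝ} (hε : ∀ n, 0 < ε n) :
    ∃ P Q : ℕ → A ≃⋆ₐ[ℂ] A, ∀ n, (P n ∈ innerAutGroup A ∧ Q n ∈ innerAutGroup A) ∧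
      ActionsCloseOn (D n) (ε n) (conjAction (P n) α) (conjAction (Q n) β) ∧
        AutsCloseOn (D n) (ε n) (P (n + 1)) (P n) ∧ AutsCloseOn (D n) (ε n) (Q (n + 1)) (Q n) := by
  have hcard : (1 : ℝ) ≤ Fintype.card G := by exact_mod_cast Fintype.card_pos
  obtain ⟨η, hη, hη_card⟩ : ∃ η : ℕ → ℝ, (∀ n, 0 < η n) ∧ ∀ n, 2 * Fintype.card G * η n = ε n :=
    ⟨fun n ↦ ε n / (2 * Fintype.card G), fun n ↦ div_pos (hε n) (by positivity),
      fun n ↦ mul_div_cancel₀ _ (by positivity)⟩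
  have hη_le : ∀ n, η n ≤ ε n := fun n ↦ by nlinarith [hη n, hη_card n]
  obtain ⟨s, hs, hs_succ⟩ := exists_seq_of_forall_exists_succ (x₀ := (1, 1))
    (p := fun n (s : (A ≃⋆ₐ[ℂ] A) × (A ≃⋆ₐ[ℂ] A)) ↦
      (s.1 ∈ innerAutGroup A ∧ s.2 ∈ innerAutGroup A) ∧
        ActionsCloseOn (D n ∪ s.2 '' D n) (η n) (conjAction s.1 α) (conjAction s.2 β))
    (r := fun n s s' ↦ AutsCloseOn (D n) (ε n) s'.1 s.1 ∧ AutsCloseOn (D n) (ε n) s'.2 s.2)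
    ⟨⟨one_mem _, one_mem _⟩, fun g a ha ↦ by simp [hD₀] at ha⟩
    (by
      rintro n ⟨P, Q⟩ ⟨⟨hP, hQ⟩, hclose⟩
      obtain ⟨Q', hQ', hclose', hQQ'⟩ :=
        hf'.exists_closer hGL hαβ hP hQ (hD n) (hD n) (hη n) (hη n) hclose.symm
      obtain ⟨P', hP', hclose'', hPP'⟩ := hf.exists_closer hGL (fun g ↦ (hαβ g).symm) hQ' hP
        (hD n) (hD (n + 1)) (hη (n + 1)) (hη n) hclose'.symm
      rw [hη_card] at hQQ' hPP'
      exact ⟨(P', Q'), ⟨⟨hP', hQ'⟩, hclose''⟩, hPP', hQQ'⟩)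
  exact ⟨fun n ↦ (s n).1, fun n ↦ (s n).2, fun n ↦ ⟨(hs n).1,
    (hs n).2.mono Set.subset_union_left (hη_le n), hs_succ n⟩⟩

end Intertwining

section Limit

theorem exists_monotone_finite_dense (X : Type*) [TopologicalSpace X]
    [TopologicalSpace.SeparableSpace X] [Nonempty X] :
    ∃ D : ℕ → Set X, D 0 = ∅ ∧ Monotone D ∧ (∀ n, (D n).Finite) ∧ Dense (⋃ n, D n) := by
  refine ⟨fun n ↦ TopologicalSpace.denseSeq X '' Set.Iio n, by simp,
    fun m n h ↦ Set.image_mono (Set.Iio_subset_Iio h), fun n ↦ (Set.finite_Iio n).image _, ?_⟩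
  rw [← Set.image_iUnion, Set.iUnion_Iio, Set.image_univ]
  exact TopologicalSpace.denseRange_denseSeq X

theorem cauchySeq_apply_of_dense {X Y : Type*} [PseudoMetricSpace X] [PseudoMetricSpace Y]
    {P : ℕ → X → Y} (hP : ∀ n, Isometry (P n)) {s : Set X} (hs : Dense s)
    (h : ∀ x ∈ s, CauchySeq fun n ↦ P n x) (x : X) : CauchySeq fun n ↦ P n x := by
  refine Metric.cauchySeq_iff.mpr fun ε hε ↦ ?_
  obtain ⟨y, hy, hxy⟩ := hs.exists_dist_lt x (show 0 < ε / 3 by positivity)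
  obtain ⟨N, hN⟩ := Metric.cauchySeq_iff.mp (h y hy) (ε / 3) (by positivity)
  refine ⟨N, fun m hm n hn ↦ ?_⟩
  calc dist (P m x) (P n x)
      ≤ dist (P m x) (P m y) + dist (P m y) (P n y) + dist (P n y) (P n x) := dist_triangle4 _ _ _ _
    _ = dist x y + dist (P m y) (P n y) + dist x y := by
        rw [(hP m).dist_eq, (hP n).dist_eq, dist_comm y]
    _ < ε / 3 + ε / 3 + ε / 3 := by gcongr; exact hN m hm n hn
    _ = ε := by ring

theorem cauchySeq_of_eventually_norm_sub_le_geometric {E : Type*} [SeminormedAddCommGroup E]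
    {x : ℕ → E} (h : ∀ᶠ n in atTop, ‖x (n + 1) - x n‖ ≤ (1 / 2) ^ n) : CauchySeq x := by
  obtain ⟨N, hN⟩ := eventually_atTop.mp h
  refine (cauchySeq_shift N).mp (cauchySeq_of_le_geometric (1 / 2) 1 (by norm_num) fun n ↦ ?_)
  rw [dist_comm, dist_eq_norm, one_mul, Nat.add_right_comm]
  exact (hN (n + N) (N.le_add_left n)).trans
    (pow_le_pow_of_le_one (by norm_num) (by norm_num) (n.le_add_right N))

variable {A : Type*} [NonUnitalCStarAlgebra A] {P Q : ℕ → A ≃⋆ₐ[ℂ] A} {φ ψ : A ≃⋆ₐ[ℂ] A}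

theorem tendsto_aut_apply {x : ℕ → A} {a b : A} (hP : Tendsto (fun n ↦ P n a) atTop (𝓝 b))
    (hx : Tendsto x atTop (𝓝 a)) : Tendsto (fun n ↦ P n (x n)) atTop (𝓝 b) :=
  have hxa : AsympEq x fun _ ↦ a := AsympEq.iff_tendsto_sub.mpr (tendsto_sub_nhds_zero_iff.mpr hx)
  (hxa.map_aut P).symm.tendsto hP

theorem tendsto_aut_symm_apply (h : ∀ a, Tendsto (fun n ↦ P n a) atTop (𝓝 (φ a))) (a : A) :
    Tendsto (fun n ↦ (P n).symm a) atTop (𝓝 (φ.symm a)) := by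
  have ha := h (φ.symm a)
  rw [StarAlgEquiv.apply_symm_apply, tendsto_iff_norm_sub_tendsto_zero] at ha
  refine tendsto_iff_norm_sub_tendsto_zero.mpr (ha.congr fun n ↦ ?_)
  rw [norm_aut_apply_sub, norm_sub_rev]

theorem exists_aut_tendsto (h : ∀ a, CauchySeq fun n ↦ P n a)
    (h_symm : ∀ a, CauchySeq fun n ↦ (P n).symm a) :
    ∃ φ : A ≃⋆ₐ[ℂ] A, ∀ a, Tendsto (fun n ↦ P n a) atTop (𝓝 (φ a)) := by
  choose φ hφ using fun a ↦ cauchySeq_tendsto_of_complete (h a)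
  choose ψ hψ using fun a ↦ cauchySeq_tendsto_of_complete (h_symm a)
  exact ⟨
    { toFun := φ
      invFun := ψ
      left_inv a := tendsto_nhds_unique
        (tendsto_aut_apply (P := fun n ↦ (P n).symm) (hψ (φ a)) (hφ a)) (by simp)
      right_inv a := tendsto_nhds_unique (tendsto_aut_apply (hφ (ψ a)) (hψ a)) (by simp)
      map_mul' a b := tendsto_nhds_unique (hφ (a * b)) (by simpa using (hφ a).mul (hφ b))
      map_add' a b := tendsto_nhds_unique (hφ (a + b)) (by simpa using (hφ a).add (hφ b))
      map_star' a := tendsto_nhds_unique (hφ (star a)) (by simpa [map_star] using (hφ a).star)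
      map_smul' c a := tendsto_nhds_unique (hφ (c • a)) (by simpa using (hφ a).const_smul c) }, hφ⟩

theorem exists_aut_tendsto_of_autsCloseOn {D : ℕ → Set A} (hD : Monotone D)
    (hD_dense : Dense (⋃ n, D n)) (h : ∀ n, AutsCloseOn (D n) ((1 / 2) ^ n) (P (n + 1)) (P n)) :
    ∃ φ : A ≃⋆ₐ[ℂ] A, ∀ a, Tendsto (fun n ↦ P n a) atTop (𝓝 (φ a)) := by
  have hev : ∀ a ∈ ⋃ n, D n, ∀ᶠ n in atTop, a ∈ D n := fun a ha ↦ by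
    obtain ⟨m, hm⟩ := Set.mem_iUnion.mp ha
    exact (eventually_ge_atTop m).mono fun n hn ↦ hD hn hm
  exact exists_aut_tendsto
    (cauchySeq_apply_of_dense (fun n ↦ StarAlgEquiv.isometry (P n)) hD_dense fun a ha ↦
      cauchySeq_of_eventually_norm_sub_le_geometric <| (hev a ha).mono fun n hn ↦ (h n a hn).1.le)
    (cauchySeq_apply_of_dense (fun n ↦ StarAlgEquiv.isometry (P n).symm) hD_dense fun a ha ↦
      cauchySeq_of_eventually_norm_sub_le_geometric <| (hev a ha).mono fun n hn ↦ (h n a hn).2.le)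

theorem tendsto_conjAction {G : Type*} [Group G] (h : ∀ a, Tendsto (fun n ↦ P n a) atTop (𝓝 (φ a)))
    (α : G →* (A ≃⋆ₐ[ℂ] A)) (g : G) (a : A) :
    Tendsto (fun n ↦ conjAction (P n) α g a) atTop (𝓝 (conjAction φ α g a)) :=
  tendsto_aut_apply (x := fun n ↦ α g ((P n).symm a)) (h (α g (φ.symm a)))
    (((StarAlgEquiv.isometry (α g)).continuous.tendsto _).comp (tendsto_aut_symm_apply h a))

theorem conjAction_eq_of_tendsto {G : Type*} [Group G] {α β : G →* (A ≃⋆ₐ[ℂ] A)}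
    (hP : ∀ a, Tendsto (fun n ↦ P n a) atTop (𝓝 (φ a)))
    (hQ : ∀ a, Tendsto (fun n ↦ Q n a) atTop (𝓝 (ψ a))) {D : ℕ → Set A} (hD : Monotone D)
    (hD_dense : Dense (⋃ n, D n)) {ε : ℕ → ℝ} (hε : Tendsto ε atTop (𝓝 0))
    (hclose : ∀ n, ActionsCloseOn (D n) (ε n) (conjAction (P n) α) (conjAction (Q n) β)) :
    conjAction φ α = conjAction ψ β := by
  refine MonoidHom.ext fun g ↦ DFunLike.coe_injective <|
    (StarAlgEquiv.isometry _).continuous.ext_on hD_dense (StarAlgEquiv.isometry _).continuous ?_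
  intro a ha
  obtain ⟨m, hm⟩ := Set.mem_iUnion.mp ha
  have hasymp : AsympEq (fun n ↦ conjAction (P n) α g a) fun n ↦ conjAction (Q n) β g a :=
    squeeze_zero' (.of_forall fun _ ↦ norm_nonneg _)
      ((eventually_ge_atTop m).mono fun n hn ↦ (hclose n g a (hD hn hm)).le) hε
  exact tendsto_nhds_unique (hasymp.tendsto (tendsto_conjAction hP α g a))
    (tendsto_conjAction hQ β g a)

theorem ApproxUnitarilyEquiv.of_tendsto (hP_mem : ∀ n, P n ∈ innerAutGroup A)
    (hP : ∀ a, Tendsto (fun n ↦ P n a) atTop (𝓝 (φ a))) : ApproxUnitarilyEquiv φ 1 :=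
  fun F hF δ hδ ↦ by
    have hev : ∀ᶠ n in atTop, ∀ a ∈ F, ‖P n a - φ a‖ < δ :=
      (eventually_all_finite hF).mpr fun a _ ↦
        (tendsto_iff_norm_sub_tendsto_zero.mp (hP a)).eventually_lt_const hδ
    obtain ⟨n, hn⟩ := hev.exists
    exact ⟨P n, hP_mem n, hn⟩

end Limit

theorem rohlin_actions_conjugate_general {A G : Type*} [NonUnitalCStarAlgebra A]
    [TopologicalSpace.SeparableSpace A]
    (hGL : ∀ a : A, multiplierCoe a ∈ closure {x : 𝓜(ℂ, A) | IsUnit x}) [Group G] [Fintype G]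
    {α β : G →* (A ≃⋆ₐ[ℂ] A)} (hαβ : ∀ g, ApproxUnitarilyEquiv (α g) (β g)) {f f' : G → ℕ → A}
    (hf : IsRohlinTower α f) (hf' : IsRohlinTower β f') :
    ∃ θ : A ≃⋆ₐ[ℂ] A, ApproxUnitarilyEquiv θ 1 ∧ conjAction θ α = β := by
  obtain ⟨D, hD₀, hD_mono, hD_fin, hD_dense⟩ := exists_monotone_finite_dense A
  obtain ⟨P, Q, hPQ⟩ := hf.exists_intertwining hf' hGL hαβ hD₀ hD_fin
    (ε := fun n ↦ (1 / 2) ^ n) fun n ↦ by positivity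
  choose hmem hclose hP hQ using hPQ
  obtain ⟨φ, hφ⟩ := exists_aut_tendsto_of_autsCloseOn hD_mono hD_dense hP
  obtain ⟨ψ, hψ⟩ := exists_aut_tendsto_of_autsCloseOn hD_mono hD_dense hQ
  have hconj : conjAction φ α = conjAction ψ β :=
    conjAction_eq_of_tendsto hφ hψ hD_mono hD_dense
      (tendsto_pow_atTop_nhds_zero_of_lt_one (by norm_num) (by norm_num)) hclose
  refine ⟨ψ⁻¹ * φ, .of_tendsto (P := fun n ↦ (Q n)⁻¹ * P n)
    (fun n ↦ mul_mem (inv_mem (hmem n).2) (hmem n).1) fun a ↦ ?_, ?_⟩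
  · exact tendsto_aut_apply (P := fun n ↦ (Q n).symm) (tendsto_aut_symm_apply hψ (φ a)) (hφ a)
  · rw [conjAction_mul, hconj, ← conjAction_mul, inv_mul_cancel, conjAction_one]

/-- Theorem 3.5: Let `A` be a separable C*-algebra with `A ⊆ closure(GL(Ã))`, and let `α`, `β`
be actions of a finite group `G` on `A` with the Rohlin property (expressed via representing
sequences of positive contractions) such that `α_g` and `β_g` are approximately unitarily
equivalent for every `g`.  Then there is an approximately inner automorphism `θ` of `A` with
`θ ∘ α_g ∘ θ⁻¹ = β_g` for every `g ∈ G`. -/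
theorem rohlin_actions_conjugate
    {A : Type*} [NonUnitalCStarAlgebra A] [PartialOrder A] [StarOrderedRing A]
    [TopologicalSpace.SeparableSpace A]
    (hGL : ∀ a : A, (a : Unitization ℂ A) ∈ closure {x : Unitization ℂ A | IsUnit x})
    {G : Type*} [Group G] [Fintype G]
    (α β : G → A ≃⋆ₐ[ℂ] A)
    (hα1 : ∀ a : A, α 1 a = a)
    (hαmul : ∀ (g h : G) (a : A), α (g * h) a = α g (α h a))
    (hβ1 : ∀ a : A, β 1 a = a)
    (hβmul : ∀ (g h : G) (a : A), β (g * h) a = β g (β h a))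
    -- (1) `α_g` and `β_g` are approximately unitarily equivalent, via unitaries in `M(A)`
    (haue : ∀ (g : G) (F₁ : Finset A) (δ : ℝ), 0 < δ →
      ∃ u ∈ unitary 𝓜(ℂ, A), ∀ y ∈ F₁, ‖(star u).snd (u.fst (β g y)) - α g y‖ < δ)
    -- (2) `α` admits Rohlin sequences `(f_{g,n})_n` of positive contractions
    (f : G → ℕ → A)
    (hf_pos : ∀ g n, 0 ≤ f g n)
    (hf_norm : ∀ g n, ‖f g n‖ ≤ 1)
    (hf_central : ∀ (a : A) (g : G),
      Tendsto (fun n => ‖f g n * a - a * f g n‖) atTop (𝓝 0))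
    (hf_orth : ∀ (a : A) (g h : G), g ≠ h →
      Tendsto (fun n => ‖f g n * f h n * a‖) atTop (𝓝 0))
    (hf_idem : ∀ (a : A) (g : G),
      Tendsto (fun n => ‖(f g n * f g n - f g n) * a‖) atTop (𝓝 0))
    (hf_sum : ∀ a : A,
      Tendsto (fun n => ‖(∑ k : G, f k n) * a - a‖) atTop (𝓝 0))
    (hf_equiv : ∀ (a : A) (g h : G),
      Tendsto (fun n => ‖(α g (f h n) - f (g * h) n) * a‖) atTop (𝓝 0))
    -- (2') `β` admits Rohlin sequences `(f'_{g,n})_n` of positive contractions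
    (f' : G → ℕ → A)
    (hf'_pos : ∀ g n, 0 ≤ f' g n)
    (hf'_norm : ∀ g n, ‖f' g n‖ ≤ 1)
    (hf'_central : ∀ (a : A) (g : G),
      Tendsto (fun n => ‖f' g n * a - a * f' g n‖) atTop (𝓝 0))
    (hf'_orth : ∀ (a : A) (g h : G), g ≠ h →
      Tendsto (fun n => ‖f' g n * f' h n * a‖) atTop (𝓝 0))
    (hf'_idem : ∀ (a : A) (g : G),
      Tendsto (fun n => ‖(f' g n * f' g n - f' g n) * a‖) atTop (𝓝 0))
    (hf'_sum : ∀ a : A,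
      Tendsto (fun n => ‖(∑ k : G, f' k n) * a - a‖) atTop (𝓝 0))
    (hf'_equiv : ∀ (a : A) (g h : G),
      Tendsto (fun n => ‖(β g (f' h n) - f' (g * h) n) * a‖) atTop (𝓝 0)) :
    ∃ θ : A ≃⋆ₐ[ℂ] A,
      (∀ (F : Finset A) (ε : ℝ), 0 < ε →
        ∃ u ∈ unitary 𝓜(ℂ, A), ∀ a ∈ F, ‖θ a - (star u).snd (u.fst a)‖ < ε) ∧
      ∀ (g : G) (a : A), θ (α g (θ.symm a)) = β g a := by
  obtain ⟨θ, hθ, hconj⟩ := rohlin_actions_conjugate_general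
    (fun a ↦ multiplierCoe_mem_closure_isUnit (hGL a))
    (α := .mk' α fun g h ↦ StarAlgEquiv.ext (hαmul g h))
    (β := .mk' β fun g h ↦ StarAlgEquiv.ext (hβmul g h))
    (fun g F hF δ hδ ↦
      have ⟨u, hu, huF⟩ := haue g hF.toFinset δ hδ
      ⟨innerAut ⟨u, hu⟩, ⟨_, rfl⟩, fun a ha ↦ huF a (hF.mem_toFinset.mpr ha)⟩)
    ⟨⟨fun k n ↦ (hf_pos k n).isSelfAdjoint, hf_norm, fun a _ ↦ hf_central a,
      fun a _ ↦ hf_orth a, fun a _ ↦ hf_idem a, fun a _ ↦ hf_sum a⟩, hf_equiv⟩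
    ⟨⟨fun k n ↦ (hf'_pos k n).isSelfAdjoint, hf'_norm, fun a _ ↦ hf'_central a,
      fun a _ ↦ hf'_orth a, fun a _ ↦ hf'_idem a, fun a _ ↦ hf'_sum a⟩, hf'_equiv⟩
  refine ⟨θ, fun F ε hε ↦ ?_, fun g a ↦ DFunLike.congr_fun (DFunLike.congr_fun hconj g) a⟩
  obtain ⟨_, ⟨u, rfl⟩, hu⟩ := hθ F F.finite_toSet ε hε
  exact ⟨u, u.2, fun a ha ↦ (norm_sub_rev (θ a) _).trans_lt (hu a ha)⟩
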